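/- Sequential composition: if for each i ∈ {1,…,k} the mechanism M_i : D^n → PMF(R_i) satisfies ε_i-differential privacy, then the mechanism M : D^n → PMF(R_1 × ⋯ × R_k) that on input x outputs the independent product of the distributions M_1(x), …, M_k(x) satisfies (ε_1 + ⋯ + ε_k)-differential privacy. -/

import Mathlib

open Finset

section
variable {D : Type*} [Fintype D] [DecidableEq D] {n : ℕ}

/-- A randomized algorithm `M : D^n → PMF O` satisfies `ε`-differential privacy if for all
databases `x, y` at Hamming distance at most 1 and every output `o`,
`Pr[M(x) = o] ≤ exp ε * Pr[M(y) = o]`. -/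
def DP {O : Type*} (M : (Fin n → D) → PMF O) (ε : ℝ) : Prop :=
  ∀ x y : Fin n → D, hammingDist x y ≤ 1 →
    ∀ o : O, M x o ≤ ENNReal.ofReal (Real.exp ε) * M y o

/-- Sequential composition: if each mechanism `M i` is `ε i`-differentially private, then the
mechanism `Mprod` which on input `x` outputs the independent product of the distributions
`M 1 x, …, M k x` is `(∑ i, ε i)`-differentially private. -/
theorem sequential_composition {k : ℕ} {Rs : Fin k → Type*} [∀ i, Countable (Rs i)]
    (ε : Fin k → ℝ) (hε : ∀ i, 0 ≤ ε i)
    (M : ∀ i : Fin k, (Fin n → D) → PMF (Rs i))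
    (hDP : ∀ i : Fin k, DP (M i) (ε i))
    (Mprod : (Fin n → D) → PMF (∀ i, Rs i))
    (hprod : ∀ (x : Fin n → D) (o : ∀ i, Rs i), Mprod x o = ∏ i, M i x (o i)) :
    DP Mprod (∑ i, ε i) := by
  intro x y hxy o
  rw [hprod, hprod, Real.exp_sum,
    ENNReal.ofReal_prod_of_nonneg (fun i _ => (Real.exp_pos (ε i)).le),
    ← Finset.prod_mul_distrib]
  exact Finset.prod_le_prod' (fun i _ => hDP i x y hxy (o i))

end
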